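/- Let Φ = {f_1,…,f_N} be an iterated function system of contracting similarities on ℝ^d with ratios λ_1,…,λ_N satisfying the open set condition, let p be a probability vector with all p_i > 0, let α > 0, and let ℓ : ℕ → ℕ be monotone increasing with liminf_{n→∞} ℓ(n)/log n = 1/α. If α < −Σ_{i=1}^N λ_i^{s₀} log p_i, then for ℙ_p-almost every ō ∈ Σ one has H^{s₀}(Λ ∖ R(ō,ℓ)) = H^{s₀}(Λ); and if α > −log p_min, then for ℙ_p-almost every ō ∈ Σ the complement Λ ∖ R(ō,ℓ) is empty. -/

import Mathlib

/-!
Both halves are proved by counting words.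

Small `α`. Put `q_i = λ_i ^ s₀`, so `∑ q_i = 1`, and fix `α < β < -∑ q_i log p_i`. All but finitely
many `n` satisfy `n ≤ e^(β ℓ(n))`, so at most about `e^(βL)` blocks of length `L` are ever used,
and a word `w` of length `L` is among them with probability at most
`min 1 (2 e^(βL) p_w) ≤ (2 e^(βL) p_w) ^ t` for every `t ∈ (0, 1)`. Hence the expected value of
`∑ q_w` over the words used at level `L` is at most `2 ^ t (∑ q_i (e^β p_i) ^ t) ^ L`
(`measure_hitSet_le`). The derivative of `∑ q_i (e^β p_i) ^ t` at `t = 0` is negative, so this decays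
geometrically for some small `t` (`exists_chernoff`). Almost surely, therefore, the cylinders used
satisfy `∑ λ_w ^ s₀ < ∞` (`ae_tsum_hit_ne_top`), and as `diam π[w] ≤ λ_w diam Λ`, the tails of this
family cover `R(ō, ℓ)` with arbitrarily small `s₀`-sums (`hausdorff_coding_null`). So `R(ō, ℓ)` is
`H^{s₀}`-null.

Large `α`. Fix `-log p_min < β < α`. Infinitely many `n` satisfy `e^(βL) ≤ n` with `L = ℓ(n)`. Since
`ℓ` is monotone, every point is covered by a block starting in `[K, n]` as soon as each of the
`N ^ L` words of length `L` is seen there. Disjoint blocks are independent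
(`measure_inter_blockSet`), so a given word is missed with probability at most
`(1 - p_min ^ L) ^ M` with `M ≈ e^(βL) / (L + 1)`, and as `p_min e^β > 1` the union bound tends to
zero (`tendsto_unionBound`). Thus for each `K` the blocks from positions `n ≥ K` almost surely
cover all of `Σ` (`measure_uncovered`), and `π` maps `Σ` onto `Λ` (`coding_surj`).
-/

open MeasureTheory Filter Topology Set ENNReal

noncomputable section

/-- The cylinder set in `{1,…,N}^ℕ` determined by a finite word `w` of length `m`. -/
def cylinder {N m : ℕ} (w : Fin m → Fin N) : Set (ℕ → Fin N) :=
  {x | ∀ j : Fin m, x (j : ℕ) = w j}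

/-- The product `r_{w 0} ⋯ r_{w (m-1)}` of weights along a finite word `w`. -/
def wordProd {N : ℕ} (r : Fin N → ℝ) {m : ℕ} (w : Fin m → Fin N) : ℝ :=
  ∏ j, r (w j)

/-- The composition `f_{x 0} ∘ f_{x 1} ∘ ⋯ ∘ f_{x (n-1)}` of the maps along
the first `n` symbols of `x`; the coding map is `π x = lim_n prefixMap f x n 0`. -/
def prefixMap {N : ℕ} {E : Type*} (f : Fin N → E → E) (x : ℕ → Fin N) : ℕ → E → E
  | 0 => id
  | n + 1 => fun y => f (x 0) (prefixMap f (fun k => x (k + 1)) n y)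

/-- The symbolic limsup set `⋂ₖ ⋃_{n ≥ k} [(σⁿ ō)|_{ℓ(n)}]`; its image under the
coding map `π` is the dynamical covering set `R(ō, ℓ)`. -/
def limsupCylinders {N : ℕ} (ℓ : ℕ → ℕ) (o : ℕ → Fin N) : Set (ℕ → Fin N) :=
  ⋂ k, ⋃ n, ⋃ _ : k ≤ n, cylinder (fun j : Fin (ℓ n) => o (n + (j : ℕ)))

/-- `m(n) = ⌊#{k ∈ ℕ : ℓ(k) = n}/n⌋`. -/
def countM (ℓ : ℕ → ℕ) (n : ℕ) : ℕ := Nat.card {k : ℕ | ℓ k = n} / n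

/-- The probabilistic pressure
`L(s) = limsup_n (1/n) log Σ_{|ȷ|=n} λ_ȷ^s (1 − (1 − p_ȷ)^{m(n)})`. -/
def pressL {N : ℕ} (lam p : Fin N → ℝ) (m : ℕ → ℕ) (s : ℝ) : ℝ :=
  Filter.limsup (fun n : ℕ => Real.log (∑ w : Fin n → Fin N,
    wordProd lam w ^ s * (1 - (1 - wordProd p w) ^ m n)) / (n : ℝ)) atTop

/-! ### Bernoulli measure of blocks -/

/-- Sequences whose letters at positions `n, …, n + m - 1` spell the word `w`. -/
def blockSet {N m : ℕ} (n : ℕ) (w : Fin m → Fin N) : Set (ℕ → Fin N) :=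
  {o | ∀ j : Fin m, o (n + (j : ℕ)) = w j}

theorem measurableSet_blockSet {N m : ℕ} (n : ℕ) (w : Fin m → Fin N) :
    MeasurableSet (blockSet n w) := by
  have : blockSet n w = ⋂ j : Fin m, (fun o : ℕ → Fin N => o (n + (j : ℕ))) ⁻¹' {w j} := by
    ext o; simp [blockSet]
  rw [this]
  exact MeasurableSet.iInter fun j => (measurable_pi_apply _) (measurableSet_singleton _)

theorem cylinder_eq_blockSet {N m : ℕ} (w : Fin m → Fin N) : cylinder w = blockSet 0 w := by
  simp [_root_.cylinder, blockSet]

theorem cylinder_append {N n m : ℕ} (v : Fin n → Fin N) (w : Fin m → Fin N) :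
    cylinder (Fin.append v w) = cylinder v ∩ blockSet n w := by
  ext o
  simp only [_root_.cylinder, blockSet, mem_ofPred_eq, mem_inter_iff]
  constructor
  · intro h
    refine ⟨fun j => ?_, fun j => ?_⟩
    · simpa using h (Fin.castAdd m j)
    · simpa using h (Fin.natAdd n j)
  · rintro ⟨h1, h2⟩ j
    refine Fin.addCases (fun i => ?_) (fun i => ?_) j
    · simpa using h1 i
    · simpa using h2 i

theorem wordProd_append {N n m : ℕ} (r : Fin N → ℝ) (v : Fin n → Fin N) (w : Fin m → Fin N) :
    wordProd r (Fin.append v w) = wordProd r v * wordProd r w := by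
  simp [wordProd, Fin.prod_univ_add]

theorem wordProd_pos {N m : ℕ} {r : Fin N → ℝ} (hr : ∀ i, 0 < r i) (w : Fin m → Fin N) :
    0 < wordProd r w :=
  Finset.prod_pos fun _ _ => hr _

theorem sum_wordProd {N : ℕ} (r : Fin N → ℝ) (m : ℕ) :
    ∑ w : Fin m → Fin N, wordProd r w = (∑ i, r i) ^ m := by
  have := Finset.prod_univ_sum (fun _ : Fin m => (Finset.univ : Finset (Fin N))) (fun _ i => r i)
  simp only [Finset.prod_const, Finset.card_univ, Fintype.card_fin, Fintype.piFinset_univ] at this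
  exact this.symm

theorem measure_eq_sum_cylinder {N : ℕ} (μ : Measure (ℕ → Fin N)) (n : ℕ)
    (S : Set (ℕ → Fin N)) : μ S = ∑ v : Fin n → Fin N, μ (cylinder v ∩ S) := by
  let r : (ℕ → Fin N) → (Fin n → Fin N) := fun x j => x j
  have hr : ∀ v, r ⁻¹' {v} = cylinder v := by
    intro v; ext x; simp [r, _root_.cylinder, funext_iff]
  have h := sum_measure_preimage_singleton (μ := μ.restrict S) (f := r) Finset.univ
    (fun v _ => by rw [hr, cylinder_eq_blockSet]; exact measurableSet_blockSet _ _)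
  simp only [hr, Finset.coe_univ, preimage_univ, Measure.restrict_apply MeasurableSet.univ,
    univ_inter] at h
  rw [← h]
  refine Finset.sum_congr rfl fun v _ => ?_
  rw [Measure.restrict_apply]
  rw [cylinder_eq_blockSet]; exact measurableSet_blockSet _ _

/-- Independence: an event determined by the first `n` letters is independent of the word
seen at positions `n, …, n + m - 1`. -/
theorem measure_inter_blockSet {N : ℕ} {p : Fin N → ℝ} (hp : ∀ i, 0 < p i)
    (μ : Measure (ℕ → Fin N))
    (hμ : ∀ (m : ℕ) (w : Fin m → Fin N), μ (cylinder w) = ENNReal.ofReal (wordProd p w))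
    {n m : ℕ} (w : Fin m → Fin N) (S : Set (ℕ → Fin N))
    (hS : ∀ x y : ℕ → Fin N, (∀ i < n, x i = y i) → x ∈ S → y ∈ S) :
    μ (S ∩ blockSet n w) = μ S * ENNReal.ofReal (wordProd p w) := by
  rw [measure_eq_sum_cylinder μ n S, measure_eq_sum_cylinder μ n (S ∩ _), Finset.sum_mul]
  refine Finset.sum_congr rfl fun v _ => ?_
  rcases (cylinder v ∩ S).eq_empty_or_nonempty with h | ⟨x, hxv, hxS⟩
  · rw [← inter_assoc, h]; simp
  · have hsub : cylinder v ⊆ S := fun y hy =>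
      hS x y (fun i hi => (hxv ⟨i, hi⟩).trans (hy ⟨i, hi⟩).symm) hxS
    rw [← inter_assoc, inter_eq_left.2 hsub, ← cylinder_append, hμ, hμ, wordProd_append,
      ENNReal.ofReal_mul (wordProd_pos hp v).le]

theorem measure_blockSet {N : ℕ} {p : Fin N → ℝ} (hp : ∀ i, 0 < p i)
    (μ : Measure (ℕ → Fin N)) [IsProbabilityMeasure μ]
    (hμ : ∀ (m : ℕ) (w : Fin m → Fin N), μ (cylinder w) = ENNReal.ofReal (wordProd p w))
    (n : ℕ) {m : ℕ} (w : Fin m → Fin N) :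
    μ (blockSet n w) = ENNReal.ofReal (wordProd p w) := by
  simpa using measure_inter_blockSet hp μ hμ (n := n) w univ (fun _ _ _ _ => mem_univ _)

/-- The word `w` is missed in `M` successive, pairwise disjoint blocks with probability
`(1 - p_w) ^ M`. The spacing `m + 1` rather than `m` accommodates the empty word. -/
theorem measureReal_noMatch {N : ℕ} {p : Fin N → ℝ} (hp : ∀ i, 0 < p i)
    (μ : Measure (ℕ → Fin N)) [IsProbabilityMeasure μ]
    (hμ : ∀ (m : ℕ) (w : Fin m → Fin N), μ (cylinder w) = ENNReal.ofReal (wordProd p w))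
    (K M : ℕ) {m : ℕ} (w : Fin m → Fin N) :
    μ.real {o | ∀ i < M, o ∉ blockSet (K + i * (m + 1)) w} = (1 - wordProd p w) ^ M := by
  induction M with
  | zero => simp
  | succ M ih =>
    set S := {o | ∀ i < M, o ∉ blockSet (K + i * (m + 1)) w} with hSdef
    have hset : {o | ∀ i < M + 1, o ∉ blockSet (K + i * (m + 1)) w}
        = S \ blockSet (K + M * (m + 1)) w := by
      ext o
      simp only [hSdef, mem_ofPred_eq, Set.mem_sdiff]
      constructor
      · exact fun h => ⟨fun i hi => h i (by omega), h M (by omega)⟩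
      · rintro ⟨h1, h2⟩ i hi
        rcases Nat.lt_succ_iff_lt_or_eq.1 hi with h | rfl
        exacts [h1 i h, h2]
    have hdep : ∀ x y : ℕ → Fin N, (∀ i < K + M * (m + 1), x i = y i) → x ∈ S → y ∈ S := by
      intro x y hxy hx i hi hy
      refine hx i hi fun j => ?_
      rw [← hy j]
      have h1 : (i + 1) * (m + 1) ≤ M * (m + 1) := Nat.mul_le_mul_right _ hi
      have h2 := j.2
      refine hxy _ ?_
      rw [add_mul] at h1
      omega
    have hind := measure_inter_blockSet hp μ hμ w S hdep
    have hind' : μ.real (S ∩ blockSet (K + M * (m + 1)) w) = μ.real S * wordProd p w := by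
      simp only [Measure.real, hind, ENNReal.toReal_mul,
        ENNReal.toReal_ofReal (wordProd_pos hp w).le]
    have hadd := measureReal_inter_add_sdiff (μ := μ) (s := S)
      (measurableSet_blockSet (K + M * (m + 1)) w)
    rw [hset, pow_succ, ← ih]
    linarith

/-! ### Geometry of the coding map -/

theorem dist_prefixMap {N : ℕ} {E : Type*} [PseudoMetricSpace E] {lam : Fin N → ℝ}
    {f : Fin N → E → E} (hf : ∀ i x y, dist (f i x) (f i y) = lam i * dist x y)
    (n : ℕ) (x : ℕ → Fin N) (a b : E) :
    dist (prefixMap f x n a) (prefixMap f x n b)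
      = wordProd lam (fun j : Fin n => x j) * dist a b := by
  induction n generalizing x with
  | zero => simp [prefixMap, wordProd]
  | succ n ih =>
    simp only [prefixMap, hf, ih, wordProd, Fin.prod_univ_succ]
    simp [mul_assoc]

theorem prefixMap_congr {N : ℕ} {E : Type*} (f : Fin N → E → E) (n : ℕ) (x y : ℕ → Fin N)
    (h : ∀ i < n, x i = y i) : prefixMap f x n = prefixMap f y n := by
  induction n generalizing x y with
  | zero => rfl
  | succ n ih =>
    simp only [prefixMap]
    rw [h 0 (by omega), ih _ _ fun i hi => h (i + 1) (by omega)]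

theorem exists_ratio_bound {N : ℕ} {lam : Fin N → ℝ}
    (hlam : ∀ i, lam i ∈ Set.Ioo (0 : ℝ) 1) :
    ∃ r : ℝ, 0 ≤ r ∧ r < 1 ∧ ∀ (n : ℕ) (w : Fin n → Fin N), wordProd lam w ≤ r ^ n := by
  have : ∃ r : ℝ, 0 ≤ r ∧ r < 1 ∧ ∀ i, lam i ≤ r := by
    rcases isEmpty_or_nonempty (Fin N) with h | h
    · exact ⟨0, le_rfl, one_pos, fun i => h.elim i⟩
    · obtain ⟨i, hi⟩ := Finite.exists_max lam
      exact ⟨lam i, (hlam i).1.le, (hlam i).2, hi⟩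
  obtain ⟨r, h0, h1, hr⟩ := this
  refine ⟨r, h0, h1, fun n w => ?_⟩
  calc wordProd lam w ≤ ∏ _j : Fin n, r :=
        Finset.prod_le_prod (fun j _ => (hlam _).1.le) (fun j _ => hr _)
    _ = r ^ n := by simp

theorem tendsto_dist_prefixMap {N : ℕ} {E : Type*} [PseudoMetricSpace E] {lam : Fin N → ℝ}
    (hlam : ∀ i, lam i ∈ Set.Ioo (0 : ℝ) 1)
    {f : Fin N → E → E} (hf : ∀ i x y, dist (f i x) (f i y) = lam i * dist x y)
    (x : ℕ → Fin N) (a b : ℕ → E) (C : ℝ) (hC : ∀ n, dist (a n) (b n) ≤ C) :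
    Tendsto (fun n => dist (prefixMap f x n (a n)) (prefixMap f x n (b n))) atTop (𝓝 0) := by
  obtain ⟨r, h0, h1, hr⟩ := exists_ratio_bound hlam
  refine squeeze_zero (g := fun n => r ^ n * C) (fun _ => dist_nonneg) (fun n => ?_) ?_
  · rw [dist_prefixMap hf]
    exact mul_le_mul (hr _ _) (hC n) dist_nonneg (pow_nonneg h0 n)
  · simpa using (tendsto_pow_atTop_nhds_zero_of_lt_one h0 h1).mul_const C

theorem coding_mem {N : ℕ} {E : Type*} [PseudoMetricSpace E] {lam : Fin N → ℝ}
    (hlam : ∀ i, lam i ∈ Set.Ioo (0 : ℝ) 1)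
    {f : Fin N → E → E} (hf : ∀ i x y, dist (f i x) (f i y) = lam i * dist x y)
    {Λ : Set E} (hΛne : Λ.Nonempty) (hΛc : IsClosed Λ) (hΛ : Λ = ⋃ i, f i '' Λ) (z : E)
    {x : ℕ → Fin N} {y : E} (hy : Tendsto (fun n => prefixMap f x n z) atTop (𝓝 y)) :
    y ∈ Λ := by
  obtain ⟨a, ha⟩ := hΛne
  have hmap : ∀ (n : ℕ) (x : ℕ → Fin N), prefixMap f x n a ∈ Λ := by
    intro n
    induction n with
    | zero => exact fun _ => ha
    | succ n ih =>
      intro x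
      rw [hΛ]
      exact mem_iUnion.2 ⟨x 0, mem_image_of_mem _ (ih _)⟩
  have h := tendsto_dist_prefixMap hlam hf x (fun _ => z) (fun _ => a) _ (fun _ => le_rfl)
  exact hΛc.mem_of_tendsto (tendsto_of_tendsto_of_dist hy h) (Eventually.of_forall fun n => hmap n x)

theorem coding_eq_prefixMap {N : ℕ} {E : Type*} [MetricSpace E] {lam : Fin N → ℝ}
    (hlam : ∀ i, lam i ∈ Set.Ioo (0 : ℝ) 1)
    {f : Fin N → E → E} (hf : ∀ i x y, dist (f i x) (f i y) = lam i * dist x y) (z : E)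
    {π : (ℕ → Fin N) → E} (hπ : ∀ x, Tendsto (fun n => prefixMap f x n z) atTop (𝓝 (π x)))
    (n : ℕ) (x : ℕ → Fin N) : π x = prefixMap f x n (π fun k => x (k + n)) := by
  induction n generalizing x with
  | zero => rfl
  | succ n ih =>
    have hcont : Continuous (f (x 0)) := by
      refine (LipschitzWith.of_dist_le_mul (K := ⟨lam (x 0), (hlam _).1.le⟩)
        fun a b => ?_).continuous
      exact (hf _ a b).le
    have h1 : Tendsto (fun n => prefixMap f x (n + 1) z) atTop
        (𝓝 (f (x 0) (π fun k => x (k + 1)))) :=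
      (hcont.tendsto _).comp (hπ fun k => x (k + 1))
    have h2 := tendsto_nhds_unique ((tendsto_add_atTop_iff_nat 1).2 (hπ x)) h1
    rw [h2, ih]
    simp only [prefixMap]
    congr 3

theorem coding_surj {N : ℕ} {E : Type*} [MetricSpace E] {lam : Fin N → ℝ}
    (hlam : ∀ i, lam i ∈ Set.Ioo (0 : ℝ) 1)
    {f : Fin N → E → E} (hf : ∀ i x y, dist (f i x) (f i y) = lam i * dist x y)
    {Λ : Set E} (hΛb : Bornology.IsBounded Λ) (hΛ : Λ = ⋃ i, f i '' Λ) (z : E)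
    {π : (ℕ → Fin N) → E} (hπ : ∀ x, Tendsto (fun n => prefixMap f x n z) atTop (𝓝 (π x)))
    {y : E} (hy : y ∈ Λ) : ∃ x, π x = y := by
  have hpre : ∀ a : Λ, ∃ b : Fin N × Λ, f b.1 b.2 = a := by
    rintro ⟨a, ha⟩
    rw [hΛ] at ha
    obtain ⟨i, c, hc, rfl⟩ := mem_iUnion.1 ha
    exact ⟨(i, ⟨c, hc⟩), rfl⟩
  choose g hg using hpre
  -- `T` inverts one branch of the system; the itinerary of `y` under `T` is a code of `y`.
  let T : Λ → Λ := fun a => (g a).2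
  have key : ∀ (n : ℕ) (a : Λ),
      prefixMap f (fun k => (g (T^[k] a)).1) n (T^[n] a : Λ) = (a : E) := by
    intro n
    induction n with
    | zero => exact fun a => rfl
    | succ n ih =>
      intro a
      simp only [prefixMap, Function.iterate_succ, Function.comp]
      rw [ih (T a)]
      exact hg a
  let a : Λ := ⟨y, hy⟩
  refine ⟨fun k => (g (T^[k] a)).1, ?_⟩
  obtain ⟨C, hC⟩ := hΛb.subset_closedBall z
  have h := tendsto_dist_prefixMap hlam hf (fun k => (g (T^[k] a)).1) (fun _ => z)
    (fun n => (T^[n] a : Λ)) C (fun n => by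
      rw [dist_comm]; exact hC (T^[n] a).2)
  have h2 := tendsto_of_tendsto_of_dist (hπ _) h
  simp only [key] at h2
  exact (tendsto_nhds_unique tendsto_const_nhds h2).symm

theorem ediam_coding_cylinder {N : ℕ} {E : Type*} [MetricSpace E] {lam : Fin N → ℝ}
    (hlam : ∀ i, lam i ∈ Set.Ioo (0 : ℝ) 1)
    {f : Fin N → E → E} (hf : ∀ i x y, dist (f i x) (f i y) = lam i * dist x y) (z : E)
    {Λ : Set E} (hΛb : Bornology.IsBounded Λ)
    {π : (ℕ → Fin N) → E} (hπ : ∀ x, Tendsto (fun n => prefixMap f x n z) atTop (𝓝 (π x)))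
    (hmem : ∀ x, π x ∈ Λ) {m : ℕ} (w : Fin m → Fin N) :
    Metric.ediam (π '' cylinder w) ≤ ENNReal.ofReal (wordProd lam w * Metric.diam Λ) := by
  refine Metric.ediam_le ?_
  rintro _ ⟨x, hx, rfl⟩ _ ⟨y, hy, rfl⟩
  rw [edist_dist]
  refine ENNReal.ofReal_le_ofReal ?_
  have hxw : (fun j : Fin m => x j) = w := funext hx
  rw [coding_eq_prefixMap hlam hf z hπ m x, coding_eq_prefixMap hlam hf z hπ m y,
    prefixMap_congr f m y x fun i hi => (hy ⟨i, hi⟩).trans (hx ⟨i, hi⟩).symm,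
    dist_prefixMap hf, hxw]
  exact mul_le_mul_of_nonneg_left (Metric.dist_le_diam_of_mem hΛb (hmem _) (hmem _))
    (wordProd_pos (fun i => (hlam i).1) w).le

open Classical in
/-- Borel–Cantelli for Hausdorff measure: if every point of `S` lies in infinitely many of a
family of cylinders `[w]` with `∑ λ_w ^ s < ∞`, then `π(S)` is `H^s`-null. -/
theorem hausdorff_coding_null {N : ℕ} {E : Type*} [MetricSpace E] [MeasurableSpace E]
    [BorelSpace E] {lam : Fin N → ℝ}
    (hlam : ∀ i, lam i ∈ Set.Ioo (0 : ℝ) 1)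
    {f : Fin N → E → E} (hf : ∀ i x y, dist (f i x) (f i y) = lam i * dist x y) (z : E)
    {Λ : Set E} (hΛb : Bornology.IsBounded Λ)
    {π : (ℕ → Fin N) → E} (hπ : ∀ x, Tendsto (fun n => prefixMap f x n z) atTop (𝓝 (π x)))
    (hmem : ∀ x, π x ∈ Λ) {s : ℝ} (hs : 0 < s) (A : ∀ L : ℕ, (Fin L → Fin N) → Prop)
    (hsum : ∑' L, ∑ w : Fin L → Fin N,
      (if A L w then ENNReal.ofReal (wordProd (fun i => lam i ^ s) w) else 0) ≠ ∞)
    (S : Set (ℕ → Fin N)) (hS : ∀ x ∈ S, ∀ K, ∃ L ≥ K, A L fun j => x j) :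
    μH[s] (π '' S) = 0 := by
  obtain ⟨r, h0, h1, hr⟩ := exists_ratio_bound hlam
  set D := Metric.diam Λ with hD
  have hD0 : 0 ≤ D := Metric.diam_nonneg
  set F : ℕ → ℝ≥0∞ := fun L => ∑ w : Fin L → Fin N,
      (if A L w then ENNReal.ofReal (wordProd (fun i => lam i ^ s) w) else 0) with hF
  let t : ∀ K : ℕ, (Σ L : ℕ, (Fin (L + K) → Fin N)) → Set E :=
    fun K i => if A (i.1 + K) i.2 then π '' cylinder i.2 else ∅
  have hle := Measure.hausdorffMeasure_le_liminf_tsum (l := atTop) s (π '' S)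
    (fun K : ℕ => ENNReal.ofReal (r ^ K * D)) (by
      have := (tendsto_pow_atTop_nhds_zero_of_lt_one h0 h1).mul_const D
      simpa using ENNReal.tendsto_ofReal this) t
    (Eventually.of_forall fun K i => by
      simp only [t]
      split_ifs
      · refine (ediam_coding_cylinder hlam hf z hΛb hπ hmem i.2).trans
          (ENNReal.ofReal_le_ofReal (mul_le_mul_of_nonneg_right ((hr _ _).trans ?_) hD0))
        exact pow_le_pow_of_le_one h0 h1.le (by omega)
      · simp)
    (Eventually.of_forall fun K => by
      rintro _ ⟨x, hx, rfl⟩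
      obtain ⟨L, hL, hA⟩ := hS x hx K
      obtain ⟨L, rfl⟩ := Nat.exists_eq_add_of_le' hL
      refine mem_iUnion.2 ⟨⟨L, fun j => x j⟩, ?_⟩
      simp only [t, if_pos hA]
      exact mem_image_of_mem _ fun j => rfl)
  have hterm : ∀ K (i : Σ L : ℕ, (Fin (L + K) → Fin N)), Metric.ediam (t K i) ^ s ≤
      (if A (i.1 + K) i.2 then ENNReal.ofReal (wordProd (fun i => lam i ^ s) i.2) else 0)
        * ENNReal.ofReal (D ^ s) := by
    intro K i
    simp only [t]
    split_ifs
    · have hw := (wordProd_pos (fun i => (hlam i).1) i.2).le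
      calc _ ≤ ENNReal.ofReal (wordProd lam i.2 * D) ^ s :=
            ENNReal.rpow_le_rpow (ediam_coding_cylinder hlam hf z hΛb hπ hmem i.2) hs.le
        _ = _ := by
          rw [ENNReal.ofReal_rpow_of_nonneg (mul_nonneg hw hD0) hs.le, Real.mul_rpow hw hD0,
            ENNReal.ofReal_mul (Real.rpow_nonneg hw s)]
          congr 2
          exact (Real.finsetProd_rpow _ _ (fun j _ => (hlam _).1.le) s).symm
    · simp [hs]
  have hbound : ∀ K, ∑' i, Metric.ediam (t K i) ^ s ≤
      (∑' L, F (L + K)) * ENNReal.ofReal (D ^ s) := by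
    intro K
    refine (ENNReal.tsum_le_tsum (hterm K)).trans ?_
    rw [ENNReal.tsum_mul_right, ENNReal.tsum_sigma']
    simp [hF, tsum_fintype]
  have hlim : Tendsto (fun K => (∑' L, F (L + K)) * ENNReal.ofReal (D ^ s)) atTop (𝓝 0) := by
    have := ENNReal.Tendsto.mul_const (b := ENNReal.ofReal (D ^ s))
      (ENNReal.tendsto_sum_nat_add F hsum) (Or.inr ENNReal.ofReal_ne_top)
    simpa using this
  refine le_antisymm (hle.trans ?_) bot_le
  have := liminf_le_liminf (f := atTop) (Eventually.of_forall hbound)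
  rw [hlim.liminf_eq] at this
  exact this

/-! ### Growth of the block lengths -/

theorem isBoundedUnder_ratio (ℓ : ℕ → ℕ) :
    IsBoundedUnder (· ≥ ·) atTop (fun n : ℕ => (ℓ n : ℝ) / Real.log n) :=
  isBoundedUnder_of_eventually_ge (a := 0) (Eventually.of_forall fun n =>
    div_nonneg (Nat.cast_nonneg _) (Real.log_natCast_nonneg n))

theorem eventually_le_exp {ℓ : ℕ → ℕ} {α β : ℝ} (hα : 0 < α) (hβ : α < β)
    (hℓ : liminf (fun n : ℕ => (ℓ n : ℝ) / Real.log n) atTop = 1 / α) :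
    ∀ᶠ n : ℕ in atTop, (n : ℝ) ≤ Real.exp (β * ℓ n) := by
  have h1 : 1 / β < liminf (fun n : ℕ => (ℓ n : ℝ) / Real.log n) atTop := by
    rw [hℓ]; exact one_div_lt_one_div_of_lt hα hβ
  filter_upwards [eventually_lt_of_lt_liminf h1 (isBoundedUnder_ratio ℓ),
    eventually_ge_atTop 2] with n hn hn2
  have hn2' : (2 : ℝ) ≤ n := by exact_mod_cast hn2
  have hlog : 0 < Real.log n := Real.log_pos (by linarith)
  rw [lt_div_iff₀ hlog, one_div, inv_mul_lt_iff₀ (hα.trans hβ)] at hn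
  rw [← Real.log_le_iff_le_exp (by linarith)]
  exact hn.le

theorem frequently_exp_le {ℓ : ℕ → ℕ} {α β : ℝ} (hβ0 : 0 < β) (hβ : β < α)
    (hℓ : liminf (fun n : ℕ => (ℓ n : ℝ) / Real.log n) atTop = 1 / α) :
    ∃ᶠ n : ℕ in atTop, Real.exp (β * ℓ n) ≤ n := by
  have hα : 0 < α := hβ0.trans hβ
  have hfr : ∃ᶠ n : ℕ in atTop, (ℓ n : ℝ) / Real.log n < 1 / β := by
    intro hcon
    have hmem : 1 / β ∈ {a : ℝ | ∀ᶠ n : ℕ in atTop, a ≤ (ℓ n : ℝ) / Real.log n} := by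
      filter_upwards [hcon] with n hn using not_lt.1 hn
    rw [liminf_eq] at hℓ
    by_cases hb : BddAbove {a : ℝ | ∀ᶠ n : ℕ in atTop, a ≤ (ℓ n : ℝ) / Real.log n}
    · have := le_csSup hb hmem
      rw [hℓ] at this
      exact absurd (one_div_lt_one_div_of_lt hβ0 hβ) (not_lt.2 this)
    · -- an infinite lower limit would carry the default value `0 ≠ 1 / α`
      rw [Real.sSup_of_not_bddAbove hb] at hℓ
      exact absurd hℓ (one_div_pos.2 hα).ne
  refine (hfr.and_eventually (eventually_ge_atTop 2)).mono ?_
  rintro n ⟨hn, hn2⟩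
  have hn2' : (2 : ℝ) ≤ n := by exact_mod_cast hn2
  have hlog : 0 < Real.log n := Real.log_pos (by linarith)
  rw [div_lt_iff₀ hlog, one_div, ← div_eq_inv_mul, lt_div_iff₀ hβ0] at hn
  rw [← Real.le_log_iff_exp_le (by linarith)]
  linarith

theorem tendsto_blockLength {ℓ : ℕ → ℕ} {α : ℝ} (hα : 0 < α)
    (hℓ : liminf (fun n : ℕ => (ℓ n : ℝ) / Real.log n) atTop = 1 / α) :
    Tendsto ℓ atTop atTop := by
  have h1 := eventually_le_exp hα (lt_add_one α) hℓ
  rw [← tendsto_natCast_atTop_iff (R := ℝ)]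
  have h2 : Tendsto (fun n : ℕ => Real.log n / (α + 1)) atTop atTop :=
    (Real.tendsto_log_atTop.comp tendsto_natCast_atTop_atTop).atTop_div_const (by linarith)
  refine tendsto_atTop_mono' atTop ?_ h2
  filter_upwards [h1, eventually_ge_atTop 1] with n hn hn1
  have : (0 : ℝ) < n := by exact_mod_cast hn1
  rw [← Real.log_le_iff_le_exp this] at hn
  rw [div_le_iff₀ (by linarith)]
  linarith

/-! ### Null covering set for small `α` -/

/-- A Chernoff exponent: since `t ↦ ∑ q_i (e^β p_i) ^ t` equals `1` at `0` with derivative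
`β + ∑ q_i log p_i < 0`, it drops below `1` for some small `t > 0`. -/
theorem exists_chernoff {N : ℕ} {q p : Fin N → ℝ} (hp : ∀ i, 0 < p i) (hq : ∑ i, q i = 1)
    {β : ℝ} (hβ : β < -∑ i, q i * Real.log (p i)) :
    ∃ t : ℝ, 0 < t ∧ t < 1 ∧ ∑ i, q i * (Real.exp β * p i) ^ t < 1 := by
  let G : ℝ → ℝ := fun t => ∑ i, q i * (Real.exp β * p i) ^ t
  have hpos : ∀ i, 0 < Real.exp β * p i := fun i => mul_pos (Real.exp_pos _) (hp i)
  have hder : HasDerivAt G (∑ i, q i * (β + Real.log (p i))) 0 := by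
    refine HasDerivAt.fun_sum fun i _ => ?_
    have := ((hasDerivAt_id (0 : ℝ)).const_rpow (hpos i)).const_mul (q i)
    simpa [Real.log_mul (Real.exp_pos β).ne' (hp i).ne'] using this
  have hneg : ∑ i, q i * (β + Real.log (p i)) < 0 := by
    simp only [mul_add, Finset.sum_add_distrib, ← Finset.sum_mul, hq]
    linarith
  have h0 : G 0 = 1 := by simp [G, hq]
  have hsl := (hasDerivAt_iff_tendsto_slope.1 hder).eventually (gt_mem_nhds hneg)
  have hsl' : ∀ᶠ t in 𝓝[>] (0 : ℝ), slope G 0 t < 0 :=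
    hsl.filter_mono (nhdsWithin_mono _ fun t (ht : 0 < t) => ht.ne')
  obtain ⟨t, ht, ht1⟩ := (hsl'.and (Ioo_mem_nhdsGT one_pos)).exists
  refine ⟨t, ht1.1, ht1.2, ?_⟩
  rw [slope_def_field, h0, sub_zero, div_neg_iff] at ht
  rcases ht with h | h
  · exact absurd h.2 (not_lt.2 ht1.1.le)
  · exact sub_neg.1 h.1

/-- The event that some block of length `ℓ n = L`, read from position `n`, spells `w`; it is
declared void for the finitely many lengths `L < L₀`. -/
def hitSet {N : ℕ} (ℓ : ℕ → ℕ) (L₀ : ℕ) {L : ℕ} (w : Fin L → Fin N) : Set (ℕ → Fin N) :=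
  ⋃ n, ⋃ _ : L₀ ≤ L ∧ ℓ n = L, blockSet n w

theorem measurableSet_hitSet {N : ℕ} (ℓ : ℕ → ℕ) (L₀ : ℕ) {L : ℕ} (w : Fin L → Fin N) :
    MeasurableSet (hitSet ℓ L₀ w) :=
  MeasurableSet.iUnion fun _ => MeasurableSet.iUnion fun _ => measurableSet_blockSet _ _

/-- The union bound interpolated with the trivial bound `1` through `min 1 x ≤ x ^ t`. -/
theorem measure_hitSet_le {N : ℕ} {p : Fin N → ℝ} (hp : ∀ i, 0 < p i)
    (μ : Measure (ℕ → Fin N)) [IsProbabilityMeasure μ]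
    (hμ : ∀ (m : ℕ) (w : Fin m → Fin N), μ (cylinder w) = ENNReal.ofReal (wordProd p w))
    {ℓ : ℕ → ℕ} {L₀ : ℕ} {β : ℝ} (hβ : 0 ≤ β)
    (hL₀ : ∀ n, L₀ ≤ ℓ n → (n : ℝ) ≤ Real.exp (β * ℓ n)) {t : ℝ} (ht0 : 0 < t) (ht1 : t < 1)
    {L : ℕ} (w : Fin L → Fin N) :
    μ (hitSet ℓ L₀ w) ≤ ENNReal.ofReal ((2 * (Real.exp (β * L) * wordProd p w)) ^ t) := by
  have hw := wordProd_pos hp w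
  set x := 2 * (Real.exp (β * L) * wordProd p w) with hx
  have hx0 : 0 < x := by positivity
  have hcount : μ (hitSet ℓ L₀ w) ≤ ENNReal.ofReal x := by
    have hsub : hitSet ℓ L₀ w ⊆
        ⋃ n ∈ Finset.range (⌊Real.exp (β * L)⌋₊ + 1), blockSet n w := by
      intro o ho
      simp only [hitSet, mem_iUnion] at ho ⊢
      obtain ⟨n, ⟨h1, h2⟩, h3⟩ := ho
      refine ⟨n, ?_, h3⟩
      subst h2
      exact Finset.mem_range.2 (Nat.lt_succ_of_le (Nat.le_floor (hL₀ n h1)))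
    refine (measure_mono hsub).trans ((measure_biUnion_finset_le _ _).trans ?_)
    simp only [measure_blockSet hp μ hμ, Finset.sum_const, Finset.card_range, nsmul_eq_mul]
    rw [← ENNReal.ofReal_natCast, ← ENNReal.ofReal_mul (Nat.cast_nonneg _)]
    refine ENNReal.ofReal_le_ofReal ?_
    have h1 : (⌊Real.exp (β * L)⌋₊ : ℝ) ≤ Real.exp (β * L) :=
      Nat.floor_le (Real.exp_pos _).le
    have h2 : 1 ≤ Real.exp (β * L) := Real.one_le_exp (by positivity)
    rw [hx, ← mul_assoc]
    refine mul_le_mul_of_nonneg_right ?_ hw.le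
    push_cast
    linarith
  rcases le_total x 1 with h | h
  · exact hcount.trans (ENNReal.ofReal_le_ofReal (Real.self_le_rpow_of_le_one hx0.le h ht1.le))
  · refine prob_le_one.trans ?_
    rw [← ENNReal.ofReal_one]
    exact ENNReal.ofReal_le_ofReal (Real.one_le_rpow h ht0.le)

open Classical in
/-- The cylinders that occur have almost surely finite total `q`-weight, since their expected
weight at level `L` decays geometrically. -/
theorem ae_tsum_hit_ne_top {N : ℕ} {p q : Fin N → ℝ} (hp : ∀ i, 0 < p i) (hq : ∀ i, 0 < q i)
    (hqsum : ∑ i, q i = 1)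
    (μ : Measure (ℕ → Fin N)) [IsProbabilityMeasure μ]
    (hμ : ∀ (m : ℕ) (w : Fin m → Fin N), μ (cylinder w) = ENNReal.ofReal (wordProd p w))
    {ℓ : ℕ → ℕ} {L₀ : ℕ} {β : ℝ} (hβ : 0 ≤ β)
    (hL₀ : ∀ n, L₀ ≤ ℓ n → (n : ℝ) ≤ Real.exp (β * ℓ n))
    (hβp : β < -∑ i, q i * Real.log (p i)) :
    ∀ᵐ o ∂μ, ∑' L, ∑ w : Fin L → Fin N,
      (if o ∈ hitSet ℓ L₀ w then ENNReal.ofReal (wordProd q w) else 0) ≠ ∞ := by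
  obtain ⟨t, ht0, ht1, hρ⟩ := exists_chernoff hp hqsum hβp
  set g : Fin N → ℝ := fun i => q i * (Real.exp β * p i) ^ t with hg
  have hg0 : ∀ i, 0 < g i := fun i =>
    mul_pos (hq i) (Real.rpow_pos_of_pos (mul_pos (Real.exp_pos _) (hp i)) _)
  have hmeas : ∀ (L : ℕ) (w : Fin L → Fin N), Measurable fun o : ℕ → Fin N =>
      (if o ∈ hitSet ℓ L₀ w then ENNReal.ofReal (wordProd q w) else 0) := fun L w =>
    Measurable.ite (measurableSet_hitSet ℓ L₀ w) measurable_const measurable_const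
  have hmeasL : ∀ L : ℕ, Measurable fun o : ℕ → Fin N => ∑ w : Fin L → Fin N,
      (if o ∈ hitSet ℓ L₀ w then ENNReal.ofReal (wordProd q w) else 0) := fun L =>
    Finset.measurable_fun_sum _ fun w _ => hmeas L w
  have hint : ∀ (L : ℕ) (w : Fin L → Fin N), ∫⁻ o,
      (if o ∈ hitSet ℓ L₀ w then ENNReal.ofReal (wordProd q w) else 0) ∂μ
        ≤ ENNReal.ofReal (2 ^ t * wordProd g w) := by
    intro L w
    have h1 : (fun o => if o ∈ hitSet ℓ L₀ w then ENNReal.ofReal (wordProd q w) else 0)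
        = (hitSet ℓ L₀ w).indicator fun _ => ENNReal.ofReal (wordProd q w) := by
      ext o; simp [indicator]
    rw [h1, lintegral_indicator_const (measurableSet_hitSet ℓ L₀ w)]
    refine (mul_le_mul_right (measure_hitSet_le hp μ hμ hβ hL₀ ht0 ht1 w) _).trans_eq ?_
    rw [← ENNReal.ofReal_mul (wordProd_pos hq w).le]
    congr 1
    have h2 : Real.exp (β * L) * wordProd p w = ∏ j, (Real.exp β * p (w j)) := by
      rw [Finset.prod_mul_distrib, wordProd, Finset.prod_const, Finset.card_univ,
        Fintype.card_fin, ← Real.exp_nat_mul, mul_comm β]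
    have h3 : wordProd g w = wordProd q w * (Real.exp (β * L) * wordProd p w) ^ t := by
      rw [h2, ← Real.finsetProd_rpow _ _ fun j _ => (mul_pos (Real.exp_pos _) (hp _)).le]
      simp only [wordProd, hg, Finset.prod_mul_distrib]
    rw [h3, Real.mul_rpow zero_le_two (mul_pos (Real.exp_pos _) (wordProd_pos hp w)).le]
    ring
  have hintL : ∀ L : ℕ, ∫⁻ o, ∑ w : Fin L → Fin N,
      (if o ∈ hitSet ℓ L₀ w then ENNReal.ofReal (wordProd q w) else 0) ∂μ
        ≤ ENNReal.ofReal (2 ^ t * (∑ i, g i) ^ L) := by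
    intro L
    rw [lintegral_finsetSum _ fun w _ => hmeas L w]
    refine (Finset.sum_le_sum fun w _ => hint L w).trans_eq ?_
    rw [← ENNReal.ofReal_sum_of_nonneg fun w _ =>
      mul_nonneg (by positivity) (wordProd_pos hg0 w).le, ← Finset.mul_sum, sum_wordProd]
  have hfin : ∫⁻ o, ∑' L, ∑ w : Fin L → Fin N,
      (if o ∈ hitSet ℓ L₀ w then ENNReal.ofReal (wordProd q w) else 0) ∂μ ≠ ∞ := by
    rw [lintegral_tsum fun L => (hmeasL L).aemeasurable]
    refine ne_top_of_le_ne_top ?_ (ENNReal.tsum_le_tsum hintL)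
    refine Summable.tsum_ofReal_ne_top ?_
    exact (summable_geometric_of_lt_one (Finset.sum_nonneg fun i _ => (hg0 i).le) hρ).mul_left _
  filter_upwards [ae_lt_top (Measurable.tsum hmeasL) hfin] with o ho using ho.ne

/-! ### Full covering for large `α` -/

theorem mem_cylinder_shift {N m n : ℕ} {o x : ℕ → Fin N} :
    x ∈ cylinder (fun j : Fin m => o (n + (j : ℕ))) ↔ o ∈ blockSet n (fun j : Fin m => x j) :=
  forall_congr' fun _ => eq_comm

/-- The union bound over the `N ^ L` words of length `L` tends to zero, as `ρ ^ L / (L + 1)`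
outgrows `L log N`. -/
theorem tendsto_unionBound {N : ℕ} (hN : 0 < N) {ρ : ℝ} (hρ : 1 < ρ) (K : ℝ) :
    Tendsto (fun L : ℕ => (N : ℝ) ^ L * Real.exp (-(ρ ^ L / (L + 1) - 1 - K))) atTop (𝓝 0) := by
  have hN' : (1 : ℝ) ≤ N := by exact_mod_cast hN
  have hC : 0 < Real.log N + 1 := by linarith [Real.log_nonneg hN']
  set C := Real.log N + 1 with hCdef
  have hdec : Tendsto (fun L : ℕ => Real.exp (1 + K) * Real.exp (-(L : ℝ))) atTop (𝓝 0) := by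
    have : Tendsto (fun L : ℕ => Real.exp (-(L : ℝ))) atTop (𝓝 0) :=
      Real.tendsto_exp_neg_atTop_nhds_zero.comp tendsto_natCast_atTop_atTop
    simpa using this.const_mul (Real.exp (1 + K))
  have hpow := tendsto_pow_const_div_const_pow_of_one_lt 2 hρ
  have hev := hpow.eventually (gt_mem_nhds (show (0 : ℝ) < 1 / (2 * C) by positivity))
  refine squeeze_zero' (Eventually.of_forall fun L => by positivity) ?_ hdec
  filter_upwards [hev, eventually_ge_atTop 1] with L hL hL1
  have hL1' : (1 : ℝ) ≤ L := by exact_mod_cast hL1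
  have hρL : 0 < ρ ^ L := by positivity
  rw [div_lt_div_iff₀ hρL (by positivity), one_mul] at hL
  have hmain : C * L ≤ ρ ^ L / (L + 1) := by
    rw [le_div_iff₀ (by positivity)]
    nlinarith [mul_nonneg hC.le (mul_nonneg (zero_le_one.trans hL1') (sub_nonneg.2 hL1'))]
  have hNL : (N : ℝ) ^ L = Real.exp (L * Real.log N) := by
    rw [Real.exp_nat_mul, Real.exp_log (by linarith)]
  rw [hNL, ← Real.exp_add, ← Real.exp_add]
  refine Real.exp_le_exp.2 ?_
  rw [hCdef] at hmain
  linarith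

/-- For each `K`, almost surely the blocks read from positions `n ≥ K` cover the whole symbolic
space. -/
theorem measure_uncovered {N : ℕ} (hN : 0 < N) {p : Fin N → ℝ} (hp : ∀ i, 0 < p i)
    (μ : Measure (ℕ → Fin N)) [IsProbabilityMeasure μ]
    (hμ : ∀ (m : ℕ) (w : Fin m → Fin N), μ (cylinder w) = ENNReal.ofReal (wordProd p w))
    {ℓ : ℕ → ℕ} (hℓmono : Monotone ℓ) (hℓtop : Tendsto ℓ atTop atTop) {β P : ℝ}
    (hP0 : 0 < P) (hP1 : P ≤ 1) (hPp : ∀ i, P ≤ p i) (hβP : 1 < P * Real.exp β)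
    (hfr : ∃ᶠ n : ℕ in atTop, Real.exp (β * ℓ n) ≤ n) (K : ℕ) :
    μ {o : ℕ → Fin N | ∃ x : ℕ → Fin N, ∀ n ≥ K,
      x ∉ cylinder (fun j : Fin (ℓ n) => o (n + (j : ℕ)))} = 0 := by
  set B := {o : ℕ → Fin N | ∃ x : ℕ → Fin N, ∀ n ≥ K,
      x ∉ cylinder (fun j : Fin (ℓ n) => o (n + (j : ℕ)))} with hB
  have key : ∀ n : ℕ, Real.exp (β * ℓ n) ≤ n → μ.real B ≤
      (N : ℝ) ^ (ℓ n) *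
        Real.exp (-((P * Real.exp β) ^ (ℓ n) / ((ℓ n : ℕ) + 1) - 1 - (K : ℝ))) := by
    intro n hn
    set L := ℓ n with hL
    set M := ⌊Real.exp (β * L) / (L + 1)⌋₊ - K with hM
    have hMpos : ∀ i < M, K + i * (L + 1) ≤ n := by
      intro i hi
      have h1 : i + K ≤ ⌊Real.exp (β * L) / (L + 1)⌋₊ := by omega
      have h2 : ((i + K : ℕ) : ℝ) ≤ Real.exp (β * L) / (L + 1) :=
        (Nat.cast_le.2 h1).trans (Nat.floor_le (by positivity))
      rw [le_div_iff₀ (by positivity)] at h2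
      have h3 : (i + K) * (L + 1) ≤ n := by exact_mod_cast h2.trans hn
      nlinarith [Nat.zero_le (K * L)]
    have hMge : Real.exp (β * L) / (L + 1) - 1 - K ≤ M := by
      have h1 := Nat.lt_floor_add_one (Real.exp (β * L) / (L + 1))
      have h2 : ⌊Real.exp (β * L) / (L + 1)⌋₊ ≤ M + K := by omega
      have h3 : (⌊Real.exp (β * L) / (L + 1)⌋₊ : ℝ) ≤ M + K := by exact_mod_cast h2
      linarith
    have hsub : B ⊆ ⋃ w ∈ (Finset.univ : Finset (Fin L → Fin N)),
        {o | ∀ i < M, o ∉ blockSet (K + i * (L + 1)) w} := by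
      rintro o ⟨x, hx⟩
      simp only [mem_iUnion]
      refine ⟨fun j => x j, Finset.mem_univ _, fun i hi hmem => ?_⟩
      refine hx (K + i * (L + 1)) (by omega) (mem_cylinder_shift.2 fun j => ?_)
      exact hmem ⟨j, j.2.trans_le (hℓmono (hMpos i hi))⟩
    calc μ.real B ≤ _ := measureReal_mono hsub (measure_ne_top _ _)
      _ ≤ ∑ w : Fin L → Fin N, μ.real {o | ∀ i < M, o ∉ blockSet (K + i * (L + 1)) w} :=
        measureReal_biUnion_finset_le _ _
      _ ≤ ∑ _w : Fin L → Fin N,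
          Real.exp (-((P * Real.exp β) ^ L / (L + 1) - 1 - (K : ℝ))) := by
        refine Finset.sum_le_sum fun w _ => ?_
        rw [measureReal_noMatch hp μ hμ]
        have hnn : 0 ≤ 1 - wordProd p w := by
          have := measureReal_noMatch hp μ hμ K 1 w
          rw [pow_one] at this
          rw [← this]; exact measureReal_nonneg
        have hPw : P ^ L ≤ wordProd p w := by
          calc P ^ L = ∏ _j : Fin L, P := by simp
            _ ≤ _ := Finset.prod_le_prod (fun _ _ => hP0.le) fun _ _ => hPp _
        have hPL : P ^ L ≤ 1 := pow_le_one₀ hP0.le hP1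
        have hPL0 : 0 < P ^ L := by positivity
        calc (1 - wordProd p w) ^ M ≤ Real.exp (-wordProd p w) ^ M :=
              pow_le_pow_left₀ hnn (Real.one_sub_le_exp_neg _) _
          _ = Real.exp (-(wordProd p w * M)) := by
              rw [← Real.exp_nat_mul]; congr 1; ring
          _ ≤ _ := by
              refine Real.exp_le_exp.2 (neg_le_neg ?_)
              have h1 : P ^ L * M ≤ wordProd p w * M :=
                mul_le_mul_of_nonneg_right hPw (Nat.cast_nonneg _)
              have h2 := mul_le_mul_of_nonneg_left hMge hPL0.le
              have h3 : (P * Real.exp β) ^ L / (L + 1)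
                  = P ^ L * (Real.exp (β * L) / (L + 1)) := by
                rw [mul_pow, ← Real.exp_nat_mul, mul_comm β, mul_div_assoc]
              have h4 : P ^ L * (1 + K) ≤ 1 + K :=
                mul_le_of_le_one_left (by positivity) hPL
              rw [h3]
              nlinarith
      _ = _ := by simp
  have hlim := (tendsto_unionBound hN hβP K).comp hℓtop
  have hle : μ.real B ≤ 0 := by
    by_contra! hcon
    obtain ⟨n, hn1, hn2⟩ := (hfr.and_eventually (hlim.eventually (gt_mem_nhds hcon))).exists
    exact absurd (key n hn1) (not_le.2 hn2)
  exact (measureReal_eq_zero_iff).1 (le_antisymm hle measureReal_nonneg)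

/-- If `α < −Σ λ_i^(s₀) log p_i` then a.s. the complement of the covering set has
full `s₀`-Hausdorff measure; if `α > −log p_min` then a.s. the complement is empty. -/
theorem coverSet_compl_dichotomy {N d : ℕ} [NeZero N] (hN : 2 ≤ N)
    (lam p : Fin N → ℝ)
    (hlam : ∀ i, lam i ∈ Set.Ioo (0 : ℝ) 1)
    (hp : ∀ i, 0 < p i) (hpsum : ∑ i, p i = 1)
    (f : Fin N → EuclideanSpace ℝ (Fin d) → EuclideanSpace ℝ (Fin d))
    (hf : ∀ i x y, dist (f i x) (f i y) = lam i * dist x y)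
    (Λ : Set (EuclideanSpace ℝ (Fin d)))
    (hΛne : Λ.Nonempty) (hΛc : IsCompact Λ) (hΛ : Λ = ⋃ i, f i '' Λ)
    (U : Set (EuclideanSpace ℝ (Fin d)))
    (hUne : U.Nonempty) (hUo : IsOpen U) (hUb : Bornology.IsBounded U)
    (hUsub : ∀ i, f i '' U ⊆ U)
    (hUdisj : Pairwise fun i j => Disjoint (f i '' U) (f j '' U))
    (π : (ℕ → Fin N) → EuclideanSpace ℝ (Fin d))
    (hπ : ∀ x, Filter.Tendsto (fun n => prefixMap f x n 0) Filter.atTop (nhds (π x)))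
    (μ : Measure (ℕ → Fin N)) [IsProbabilityMeasure μ]
    (hμ : ∀ (m : ℕ) (w : Fin m → Fin N), μ (cylinder w) = ENNReal.ofReal (wordProd p w))
    (α : ℝ) (hα : 0 < α)
    (ℓ : ℕ → ℕ) (hℓmono : Monotone ℓ)
    (hℓ : Filter.liminf (fun n : ℕ => (ℓ n : ℝ) / Real.log n) Filter.atTop = 1 / α)
    (s0 : ℝ) (hs0 : ∑ i, lam i ^ s0 = 1) :
    (α < -∑ i, lam i ^ s0 * Real.log (p i) →
      ∀ᵐ o ∂μ, μH[s0] (Λ \ π '' limsupCylinders ℓ o) = μH[s0] Λ) ∧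
    (-Real.log (⨅ i, p i) < α →
      ∀ᵐ o ∂μ, Λ \ π '' limsupCylinders ℓ o = ∅) := by
  have hℓtop := tendsto_blockLength hα hℓ
  refine ⟨fun hαlt => ?_, fun hαgt => ?_⟩
  · have hs0pos : 0 < s0 := by
      by_contra! hcon
      have h1 : ∀ i, 1 ≤ lam i ^ s0 := fun i =>
        Real.one_le_rpow_of_pos_of_le_one_of_nonpos (hlam i).1 (hlam i).2.le hcon
      have h2 := Finset.sum_le_sum fun i (_ : i ∈ Finset.univ) => h1 i
      rw [hs0] at h2
      simp only [Finset.sum_const, Finset.card_univ, Fintype.card_fin, nsmul_eq_mul,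
        mul_one] at h2
      have : N ≤ 1 := by exact_mod_cast h2
      omega
    obtain ⟨β, hαβ, hβlt⟩ := exists_between hαlt
    obtain ⟨n₀, hn₀⟩ := eventually_atTop.1 (eventually_le_exp hα hαβ hℓ)
    have hL₀ : ∀ n, ℓ n₀ + 1 ≤ ℓ n → (n : ℝ) ≤ Real.exp (β * ℓ n) := by
      intro n hn
      refine hn₀ n ?_
      by_contra! hcon
      have := hℓmono hcon.le
      omega
    have hmem : ∀ x, π x ∈ Λ := fun x =>
      coding_mem hlam hf hΛne hΛc.isClosed hΛ 0 (hπ x)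
    filter_upwards [ae_tsum_hit_ne_top hp (fun i => Real.rpow_pos_of_pos (hlam i).1 s0) hs0 μ hμ
      (hα.trans hαβ).le hL₀ hβlt] with o ho
    refine measure_sdiff_null (hausdorff_coding_null hlam hf 0 hΛc.isBounded hπ hmem hs0pos
      (fun L w => o ∈ hitSet ℓ (ℓ n₀ + 1) w) ho _ fun x hx K => ?_)
    obtain ⟨k, hk⟩ := eventually_atTop.1 (hℓtop.eventually_ge_atTop (max K (ℓ n₀ + 1)))
    simp only [limsupCylinders, mem_iInter, mem_iUnion] at hx
    obtain ⟨n, hkn, hxn⟩ := hx k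
    have hmax := hk n hkn
    refine ⟨ℓ n, (le_max_left _ _).trans hmax, ?_⟩
    simp only [hitSet, mem_iUnion]
    exact ⟨n, ⟨(le_max_right _ _).trans hmax, rfl⟩, mem_cylinder_shift.1 hxn⟩
  · obtain ⟨i₀, hi₀⟩ := exists_eq_ciInf_of_finite (f := p)
    have hPp : ∀ i, (⨅ i, p i) ≤ p i := fun i => ciInf_le (Set.finite_range p).bddBelow i
    set P := ⨅ i, p i with hP
    have hP0 : 0 < P := hi₀ ▸ hp i₀
    have hP1 : P ≤ 1 := by
      rw [← hi₀, ← hpsum]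
      exact Finset.single_le_sum (fun i _ => (hp i).le) (Finset.mem_univ i₀)
    obtain ⟨β, hPβ, hβα⟩ := exists_between hαgt
    have hβ0 : 0 < β := by linarith [Real.log_nonpos hP0.le hP1]
    have hβP : 1 < P * Real.exp β := by
      nth_rewrite 1 [← Real.exp_log hP0]
      rw [← Real.exp_add]
      exact Real.one_lt_exp_iff.2 (by linarith)
    have hae : ∀ᵐ o ∂μ, ∀ K : ℕ, ¬ ∃ x : ℕ → Fin N, ∀ n ≥ K,
        x ∉ cylinder (fun j : Fin (ℓ n) => o (n + (j : ℕ))) := by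
      refine ae_all_iff.2 fun K => ?_
      rw [ae_iff]
      simp only [not_not]
      exact measure_uncovered (by omega) hp μ hμ hℓmono hℓtop hP0 hP1 hPp hβP
        (frequently_exp_le hβ0 hβα hℓ) K
    filter_upwards [hae] with o ho
    refine sdiff_eq_empty.2 fun y hy => ?_
    obtain ⟨x, rfl⟩ := coding_surj hlam hf hΛc.isBounded hΛ 0 hπ hy
    refine mem_image_of_mem _ ?_
    simp only [limsupCylinders, mem_iInter, mem_iUnion]
    intro K
    have := ho K
    push Not at this
    obtain ⟨n, hn, hx⟩ := this x
    exact ⟨n, hn, hx⟩
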